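/- arXiv:1502.07107 — 2 statements merged into one kernel-verified Lean document; each statement's English description precedes it below -/
import Mathlib

section
/- There exists a constant C > 0 such that for every j ∈ {1, …, n} and every r > 0 one has |v_j′(r)| ≤ C/(1 + r), where v_j′ denotes the derivative of v_j. -/
open Matrix MeasureTheory

/-!
Let `M(r) = A + G(r)`. The means over `[0, r]` of `sin (μ i ρ) sin (μ j ρ)` tend to `1/2` for
`i = j` and to `0` otherwise, so `r⁻¹ M(r)` tends to the invertible matrix `1/2` and, inversion
being continuous at units, `M(r)⁻¹ = O(1/r)` at infinity. Compactness of bounded intervals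
upgrades this to `M(r)⁻¹ = O(1/(1 + r))` on `[0, ∞)`. Differentiating `M v = -s`, where `G' = s sᵀ`,
gives `v' = -M⁻¹ (s' + s sᵀ v)`, in which every factor other than `M⁻¹` is bounded.
-/

open Asymptotics Filter Set Topology
open scoped Ring

section RealAsymptotics

lemma isBigO_principal_Ici_of_isBigO_atTop {α E F : Type*} [LinearOrder α] [TopologicalSpace α]
    [CompactIccSpace α] [SeminormedAddCommGroup E] [NormedAddCommGroup F] {f : α → E} {g : α → F}
    {a : α} (hf : ContinuousOn f (Ici a)) (hg : ContinuousOn g (Ici a)) (hg₀ : ∀ r ∈ Ici a, g r ≠ 0)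
    (h : f =O[atTop] g) : f =O[𝓟 (Ici a)] g := by
  obtain ⟨c, hc⟩ := h.bound
  have : Nonempty α := ⟨a⟩
  obtain ⟨R, hR⟩ := eventually_atTop.1 hc
  have hhead : f =O[𝓟 (Icc a R)] g :=
    ((hf.mono Icc_subset_Ici_self).isBigO_principal isCompact_Icc
      (norm_ne_zero_iff.2 one_ne_zero)).trans
      ((hg.mono Icc_subset_Ici_self).isBigO_rev_principal isCompact_Icc
        (fun r hr => hg₀ r hr.1) (1 : ℝ))
  have htail : f =O[𝓟 (Ici R)] g := isBigO_principal.2 ⟨c, hR⟩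
  refine (hhead.sup htail).mono ?_
  rw [sup_principal, principal_mono]
  exact fun r hr => (le_total r R).imp (fun hle => ⟨hr, hle⟩) id

lemma isBigO_inv_atTop_one_add_inv :
    (fun r : ℝ => r⁻¹) =O[atTop] fun r : ℝ => (1 + r)⁻¹ := by
  refine IsBigO.of_bound 2 ?_
  filter_upwards [eventually_ge_atTop 1] with r hr
  rw [norm_inv, norm_inv, Real.norm_of_nonneg (by linarith), Real.norm_of_nonneg (by linarith),
    inv_eq_one_div, ← div_eq_mul_inv, div_le_div_iff₀ (by linarith) (by linarith)]
  linarith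

lemma isBigO_one_add_inv_one :
    (fun r : ℝ => (1 + r)⁻¹) =O[𝓟 (Ici 0)] fun _ => (1 : ℝ) := by
  refine isBigO_principal.2 ⟨1, fun r hr => ?_⟩
  have hr : 0 ≤ r := hr
  rw [norm_one, mul_one, norm_inv, Real.norm_of_nonneg (by linarith)]
  exact inv_le_one_of_one_le₀ (by linarith)

end RealAsymptotics

section BanachAlgebra

lemma ringInverse_smul {𝕜 S : Type*} [Field 𝕜] [Semiring S] [Algebra 𝕜 S] {c : 𝕜} (hc : c ≠ 0)
    (x : S) : (c • x)⁻¹ʳ = c⁻¹ • x⁻¹ʳ := by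
  have hinv : (algebraMap 𝕜 S c)⁻¹ʳ = algebraMap 𝕜 S c⁻¹ :=
    Ring.inverse_unit ((Units.mk0 c hc).map (algebraMap 𝕜 S).toMonoidHom)
  rw [Algebra.smul_def, Ring.mul_inverse_rev' (Algebra.commutes c x), hinv, Algebra.smul_def,
    Algebra.commutes]

variable {R : Type*} [NormedRing R] [HasSummableGeomSeries R]

lemma hasDerivAt_ringInverse {𝕜 : Type*} [NontriviallyNormedField 𝕜] [NormedAlgebra 𝕜 R]
    {M : 𝕜 → R} {M' : R} {r : 𝕜} (hM : HasDerivAt M M' r)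
    (hunit : IsUnit (M r)) :
    HasDerivAt (fun t => (M t)⁻¹ʳ) (-((M r)⁻¹ʳ * M' * (M r)⁻¹ʳ)) r := by
  obtain ⟨u, hu⟩ := hunit
  have h := hasFDerivAt_ringInverse (𝕜 := 𝕜) u
  rw [hu] at h
  refine (h.comp_hasDerivAt r hM).congr_deriv ?_
  simp [← hu]

variable [NormedAlgebra ℝ R]

lemma isBigO_ringInverse_atTop {M : ℝ → R} {L : R} (hL : IsUnit L)
    (hM : Tendsto (fun r => r⁻¹ • M r) atTop (𝓝 L)) :
    (fun r => (M r)⁻¹ʳ) =O[atTop] fun r => r⁻¹ := by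
  obtain ⟨u, rfl⟩ := hL
  have hbdd : (fun r => (r⁻¹ • M r)⁻¹ʳ) =O[atTop] fun _ => (1 : ℝ) :=
    ((NormedRing.inverse_continuousAt u).tendsto.comp hM).isBigO_one ℝ
  refine ((isBigO_refl (fun r : ℝ => r⁻¹) atTop).smul hbdd).congr' ?_ (by simp)
  filter_upwards [eventually_ne_atTop 0] with r hr
  rw [ringInverse_smul (inv_ne_zero hr), inv_inv, inv_smul_smul₀ hr]

lemma isBigO_ringInverse_Ici {M : ℝ → R} {L : R} (hL : IsUnit L)
    (hlim : Tendsto (fun r => r⁻¹ • M r) atTop (𝓝 L)) (hcont : ContinuousOn M (Ici 0))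
    (hunit : ∀ r ∈ Ici 0, IsUnit (M r)) :
    (fun r => (M r)⁻¹ʳ) =O[𝓟 (Ici 0)] fun r => (1 + r)⁻¹ := by
  have hpos : ∀ r ∈ Ici (0 : ℝ), 1 + r ≠ 0 := fun r hr => by
    have : 0 ≤ r := hr
    positivity
  refine isBigO_principal_Ici_of_isBigO_atTop (fun r hr => ?_)
    (ContinuousOn.inv₀ (by fun_prop) hpos) (fun r hr => inv_ne_zero (hpos r hr))
    ((isBigO_ringInverse_atTop hL hlim).trans isBigO_inv_atTop_one_add_inv)
  obtain ⟨u, hu⟩ := hunit r hr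
  exact ContinuousAt.comp_continuousWithinAt
    (hu ▸ NormedRing.inverse_continuousAt u) (hcont r hr)

end BanachAlgebra

section MatrixCalculus

lemma hasDerivAt_matrix_iff {𝕜 m n E : Type*} [Finite n] [NontriviallyNormedField 𝕜]
    [NormedAddCommGroup E] [NormedSpace 𝕜 E] {M : 𝕜 → Matrix m n E} {M' : Matrix m n E} {r : 𝕜} :
    HasDerivAt M M' r ↔ ∀ i j, HasDerivAt (fun t => M t i j) (M' i j) r := by
  have := Fintype.ofFinite n
  exact hasDerivAt_pi.trans (forall_congr' fun _ => hasDerivAt_pi)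

lemma hasDerivAt_mulVec {𝕜 m n 𝔸 : Type*} [Fintype n] [NontriviallyNormedField 𝕜] [NormedRing 𝔸]
    [NormedAlgebra 𝕜 𝔸] {M : 𝕜 → Matrix m n 𝔸} {M' : Matrix m n 𝔸} {b : 𝕜 → n → 𝔸} {b' : n → 𝔸}
    {r : 𝕜} (hM : HasDerivAt M M' r) (hb : HasDerivAt b b' r) :
    HasDerivAt (fun t => M t *ᵥ b t) (M' *ᵥ b r + M r *ᵥ b') r := by
  refine hasDerivAt_pi.2 fun i => ?_
  simp only [Pi.add_apply, mulVec, dotProduct, ← Finset.sum_add_distrib]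
  exact HasDerivAt.fun_sum fun k _ =>
    (hasDerivAt_matrix_iff.1 hM i k).mul (hasDerivAt_pi.1 hb k)

open scoped Matrix.Norms.Operator

lemma linfty_opNorm_vecMulVec_le {m n 𝔸 : Type*} [Fintype m] [Fintype n]
    [NonUnitalSeminormedRing 𝔸] (u : m → 𝔸) (w : n → 𝔸) :
    ‖vecMulVec u w‖ ≤ ‖u‖ * ∑ j, ‖w j‖ := by
  rw [vecMulVec_eq Unit, ← linfty_opNorm_replicateCol (ι := Unit),
    ← linfty_opNorm_replicateRow (ι := Unit)]
  exact linfty_opNorm_mul _ _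

lemma isBigO_mulVec {α m n 𝔸 : Type*} [Fintype m] [Fintype n] [NonUnitalSeminormedRing 𝔸]
    {l : Filter α} {M : α → Matrix m n 𝔸} {b : α → n → 𝔸} {f g : α → ℝ} (hM : M =O[l] f)
    (hb : b =O[l] g) : (fun x => M x *ᵥ b x) =O[l] fun x => f x * g x :=
  (IsBigO.of_norm_le fun x => linfty_opNorm_mulVec (M x) (b x)).trans
    (hM.norm_left.mul hb.norm_left)

variable {𝕜 n 𝔸 : Type*} [NontriviallyNormedField 𝕜] [Fintype n] [DecidableEq n]
  [NormedCommRing 𝔸] [NormedAlgebra 𝕜 𝔸] [CompleteSpace 𝔸]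

lemma hasDerivAt_inv_mulVec {M : 𝕜 → Matrix n n 𝔸} {M' : Matrix n n 𝔸} {b : 𝕜 → n → 𝔸}
    {b' : n → 𝔸} {r : 𝕜} (hM : HasDerivAt M M' r) (hunit : IsUnit (M r))
    (hb : HasDerivAt b b' r) :
    HasDerivAt (fun t => (M t)⁻¹ *ᵥ b t)
      ((M r)⁻¹ *ᵥ (b' - M' *ᵥ ((M r)⁻¹ *ᵥ b r))) r := by
  -- The uniformity has to be the one of the operator norm, not `Matrix.instUniformSpace`.
  have : @CompleteSpace (Matrix n n 𝔸) PseudoMetricSpace.toUniformSpace :=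
    inferInstanceAs (CompleteSpace (n → n → 𝔸))
  simp only [nonsing_inv_eq_ringInverse]
  refine (hasDerivAt_mulVec (hasDerivAt_ringInverse hM hunit) hb).congr_deriv ?_
  rw [mulVec_sub, mulVec_mulVec, mulVec_mulVec, neg_mulVec, neg_add_eq_sub]

lemma isBigO_deriv_inv_mulVec {M M' : 𝕜 → Matrix n n 𝔸} {b b' : 𝕜 → n → 𝔸} {S : Set 𝕜}
    {g : 𝕜 → ℝ} (hM : ∀ r ∈ S, HasDerivAt M (M' r) r) (hunit : ∀ r ∈ S, IsUnit (M r))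
    (hb : ∀ r ∈ S, HasDerivAt b (b' r) r) (hM' : M' =O[𝓟 S] fun _ => (1 : ℝ))
    (hb₁ : b =O[𝓟 S] fun _ => (1 : ℝ)) (hb' : b' =O[𝓟 S] fun _ => (1 : ℝ))
    (hinv : (fun r => (M r)⁻¹) =O[𝓟 S] g) (hg : g =O[𝓟 S] fun _ => (1 : ℝ)) :
    deriv (fun t => (M t)⁻¹ *ᵥ b t) =O[𝓟 S] g := by
  have hsol : (fun r => M' r *ᵥ ((M r)⁻¹ *ᵥ b r)) =O[𝓟 S] fun _ => (1 : ℝ) := by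
    simpa using isBigO_mulVec hM' (isBigO_mulVec (hinv.trans hg) hb₁)
  have hformula : (fun r => (M r)⁻¹ *ᵥ (b' r - M' r *ᵥ ((M r)⁻¹ *ᵥ b r))) =O[𝓟 S] g := by
    simpa using isBigO_mulVec hinv (hb'.sub hsol)
  refine hformula.congr' ?_ EventuallyEq.rfl
  exact fun r hr => (hasDerivAt_inv_mulVec (hM r hr) (hunit r hr) (hb r hr)).deriv.symm

end MatrixCalculus

section Sines

lemma integral_sin_mul_sin (α β r : ℝ) :
    ∫ ρ in (0 : ℝ)..r, Real.sin (α * ρ) * Real.sin (β * ρ)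
      = ((∫ ρ in (0 : ℝ)..r, Real.cos ((α - β) * ρ))
        - ∫ ρ in (0 : ℝ)..r, Real.cos ((α + β) * ρ)) / 2 := by
  rw [← intervalIntegral.integral_sub (Continuous.intervalIntegrable (by fun_prop) _ _)
    (Continuous.intervalIntegrable (by fun_prop) _ _), ← intervalIntegral.integral_div]
  congr 1 with ρ
  rw [sub_mul, add_mul, Real.cos_sub, Real.cos_add]
  ring

lemma tendsto_inv_mul_integral_cos (c : ℝ) :
    Tendsto (fun r : ℝ => r⁻¹ * ∫ ρ in (0 : ℝ)..r, Real.cos (c * ρ)) atTop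
      (𝓝 (if c = 0 then 1 else 0)) := by
  split_ifs with hc
  · refine tendsto_const_nhds.congr' ?_
    filter_upwards [eventually_ne_atTop 0] with r hr
    simp [hc, hr]
  · have hbdd : IsBoundedUnder (· ≤ ·) atTop
        (norm ∘ fun r : ℝ => ∫ ρ in (0 : ℝ)..r, Real.cos (c * ρ)) := by
      refine isBoundedUnder_of ⟨|c|⁻¹, fun r => ?_⟩
      simpa [intervalIntegral.integral_comp_mul_left _ hc, abs_mul, abs_inv] using
        mul_le_of_le_one_right (by positivity : 0 ≤ |c|⁻¹) (Real.abs_sin_le_one (c * r))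
    exact tendsto_inv_atTop_zero.zero_mul_isBoundedUnder_le hbdd

lemma tendsto_inv_mul_integral_sin_mul_sin {α β : ℝ} (h : α + β ≠ 0) :
    Tendsto (fun r : ℝ => r⁻¹ * ∫ ρ in (0 : ℝ)..r, Real.sin (α * ρ) * Real.sin (β * ρ)) atTop
      (𝓝 (if α = β then 1 / 2 else 0)) := by
  have hlim := ((tendsto_inv_mul_integral_cos (α - β)).sub
    (tendsto_inv_mul_integral_cos (α + β))).div_const 2
  refine (hlim.congr fun r => ?_).trans_eq ?_
  · rw [integral_sin_mul_sin]
    ring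
  · simp only [sub_eq_zero, h, if_false, sub_zero, ite_div, zero_div]

variable {ι : Type*}

/-- The vector of sines `s(r)` with frequencies `μ`, with complex entries so that it can be
multiplied by complex matrices. -/
noncomputable def sinVec (μ : ι → ℝ) (r : ℝ) : ι → ℂ :=
  fun i => (Real.sin (μ i * r) : ℝ)

/-- The Gram matrix `G(r)` of the functions `ρ ↦ sin (μ i * ρ)` in `L²(0, r)`, with complex
entries. -/
noncomputable def sinGram (μ : ι → ℝ) (r : ℝ) : Matrix ι ι ℂ :=
  of fun i j => ((∫ ρ in (0 : ℝ)..r, Real.sin (μ i * ρ) * Real.sin (μ j * ρ) : ℝ) : ℂ)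

lemma hasDerivAt_sinVec (μ : ι → ℝ) (r : ℝ) :
    HasDerivAt (sinVec μ) (fun i => ((Real.cos (μ i * r) * μ i : ℝ) : ℂ)) r := by
  refine hasDerivAt_pi.2 fun i => HasDerivAt.ofReal_comp ?_
  simpa using ((hasDerivAt_id r).const_mul (μ i)).sin

lemma hasDerivAt_sinGram [Finite ι] (μ : ι → ℝ) (r : ℝ) :
    HasDerivAt (sinGram μ) (vecMulVec (sinVec μ r) (sinVec μ r)) r := by
  refine hasDerivAt_matrix_iff.2 fun i j => ?_
  have hint : HasDerivAt (fun t => ∫ ρ in (0 : ℝ)..t, Real.sin (μ i * ρ) * Real.sin (μ j * ρ))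
      (Real.sin (μ i * r) * Real.sin (μ j * r)) r :=
    intervalIntegral.integral_hasDerivAt_right (Continuous.intervalIntegrable (by fun_prop) _ _)
      (Continuous.stronglyMeasurableAtFilter (by fun_prop) _ _)
      (Continuous.continuousAt (by fun_prop))
  simpa [sinGram, sinVec, vecMulVec_apply] using hint.ofReal_comp

lemma tendsto_inv_smul_sinGram [DecidableEq ι] {μ : ι → ℝ} (hμ : Function.Injective μ)
    (hadd : ∀ i j, μ i + μ j ≠ 0) :
    Tendsto (fun r : ℝ => r⁻¹ • sinGram μ r) atTop (𝓝 ((1 / 2 : ℝ) • 1)) := by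
  refine tendsto_pi_nhds.2 fun i => tendsto_pi_nhds.2 fun j => ?_
  have hlim := (Complex.continuous_ofReal.tendsto _).comp
    (tendsto_inv_mul_integral_sin_mul_sin (hadd i j))
  refine (hlim.congr fun r => ?_).trans_eq ?_
  · simp [sinGram]
  · rcases eq_or_ne i j with rfl | hij
    · simp
    · simp [hij, hμ.ne hij]

variable [Fintype ι]

lemma norm_sinVec_le_one (μ : ι → ℝ) (r : ℝ) : ‖sinVec μ r‖ ≤ 1 :=
  (pi_norm_le_iff_of_nonneg zero_le_one).2 fun i => by
    rw [sinVec, Complex.norm_real]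
    exact Real.abs_sin_le_one _

lemma norm_deriv_sinVec_le (μ : ι → ℝ) (r : ℝ) : ‖deriv (sinVec μ) r‖ ≤ ‖μ‖ := by
  rw [(hasDerivAt_sinVec μ r).deriv, pi_norm_le_iff_of_nonneg (norm_nonneg μ)]
  intro i
  rw [Complex.norm_real, norm_mul]
  exact (mul_le_of_le_one_left (norm_nonneg _) (Real.abs_cos_le_one _)).trans (norm_le_pi_norm μ i)

open scoped Matrix.Norms.Operator

lemma norm_vecMulVec_sinVec_le (μ : ι → ℝ) (r : ℝ) :
    ‖vecMulVec (sinVec μ r) (sinVec μ r)‖ ≤ Fintype.card ι := by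
  have hsum : ∑ i, ‖sinVec μ r i‖ ≤ Fintype.card ι := by
    simpa using Finset.sum_le_card_nsmul Finset.univ _ 1 fun i _ =>
      (norm_le_pi_norm (sinVec μ r) i).trans (norm_sinVec_le_one μ r)
  exact (linfty_opNorm_vecMulVec_le _ _).trans <|
    (mul_le_of_le_one_left (by positivity) (norm_sinVec_le_one μ r)).trans hsum

lemma differentiableAt_inv_add_sinGram_mulVec [DecidableEq ι] (μ : ι → ℝ) {A : Matrix ι ι ℂ}
    {r : ℝ} (hinv : IsUnit (A + sinGram μ r)) :
    DifferentiableAt ℝ (fun t => (A + sinGram μ t)⁻¹ *ᵥ sinVec μ t) r :=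
  (hasDerivAt_inv_mulVec ((hasDerivAt_sinGram μ r).const_add A) hinv
    (hasDerivAt_sinVec μ r)).differentiableAt

lemma isBigO_deriv_inv_add_sinGram_mulVec [DecidableEq ι] {μ : ι → ℝ}
    (hμ : Function.Injective μ) (hadd : ∀ i j, μ i + μ j ≠ 0) {A : Matrix ι ι ℂ}
    (hinv : ∀ r ∈ Ici 0, IsUnit (A + sinGram μ r)) :
    deriv (fun t => (A + sinGram μ t)⁻¹ *ᵥ sinVec μ t) =O[𝓟 (Ici 0)] fun r => (1 + r)⁻¹ := by
  have hM : ∀ r, HasDerivAt (fun t => A + sinGram μ t) (vecMulVec (sinVec μ r) (sinVec μ r)) r :=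
    fun r => (hasDerivAt_sinGram μ r).const_add A
  have hlim : Tendsto (fun r : ℝ => r⁻¹ • (A + sinGram μ r)) atTop (𝓝 ((1 / 2 : ℝ) • 1)) := by
    simpa [smul_add] using
      (tendsto_inv_atTop_zero.smul_const A).add (tendsto_inv_smul_sinGram hμ hadd)
  have hhalf : IsUnit ((1 / 2 : ℝ) • (1 : Matrix ι ι ℂ)) :=
    isUnit_one.smul (Units.mk0 (1 / 2 : ℝ) (by norm_num))
  have hdecay : (fun r => (A + sinGram μ r)⁻¹) =O[𝓟 (Ici 0)] fun r => (1 + r)⁻¹ := by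
    simpa only [nonsing_inv_eq_ringInverse] using isBigO_ringInverse_Ici hhalf hlim
      (fun r _ => (hM r).continuousAt.continuousWithinAt) hinv
  exact isBigO_deriv_inv_mulVec (fun r _ => hM r) hinv
    (fun r _ => (hasDerivAt_sinVec μ r).differentiableAt.hasDerivAt)
    ((IsBigO.of_norm_le (norm_vecMulVec_sinVec_le μ)).trans (isBigO_const_one ℝ _ _))
    (IsBigO.of_norm_le (norm_sinVec_le_one μ))
    ((IsBigO.of_norm_le (norm_deriv_sinVec_le μ)).trans (isBigO_const_one ℝ _ _))
    hdecay isBigO_one_add_inv_one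

end Sines

theorem stmt_9_general {ι : Type*} [Fintype ι] [DecidableEq ι] (μ : ι → ℝ)
    (hμ : Function.Injective μ) (hadd : ∀ i j, μ i + μ j ≠ 0)
    (G : ℝ → Matrix ι ι ℂ)
    (hG : ∀ (r : ℝ) (i j : ι),
      G r i j = ((∫ ρ in (0 : ℝ)..r, Real.sin (μ i * ρ) * Real.sin (μ j * ρ) : ℝ) : ℂ))
    (A : Matrix ι ι ℂ) (hinv : ∀ r : ℝ, 0 ≤ r → IsUnit (A + G r))
    (s : ℝ → ι → ℂ) (hs : ∀ (r : ℝ) (i : ι), s r i = ((Real.sin (μ i * r) : ℝ) : ℂ))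
    (v : ℝ → ι → ℂ) (hv : ∀ r : ℝ, v r = -((A + G r)⁻¹ *ᵥ s r)) :
    ∃ C > (0 : ℝ), ∀ (j : ι), ∀ r : ℝ, 0 ≤ r →
      ‖deriv (fun t : ℝ => v t j) r‖ ≤ C / (1 + r) := by
  obtain rfl : G = sinGram μ := by
    ext r i j
    exact hG r i j
  obtain rfl : s = sinVec μ := by
    ext r i
    exact hs r i
  obtain rfl : v = fun t => -((A + sinGram μ t)⁻¹ *ᵥ sinVec μ t) := funext hv
  obtain ⟨C, hC, hbound⟩ := (isBigO_deriv_inv_add_sinGram_mulVec hμ hadd hinv).exists_pos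
  refine ⟨C, hC, fun j r hr => ?_⟩
  have hv' := (differentiableAt_inv_add_sinGram_mulVec μ (hinv r hr)).hasDerivAt
  have hr₁ : 0 ≤ 1 + r := by positivity
  rw [(hasDerivAt_pi.1 hv'.fun_neg j).deriv]
  calc _ ≤ ‖deriv (fun t => (A + sinGram μ t)⁻¹ *ᵥ sinVec μ t) r‖ := by
        rw [Pi.neg_apply, norm_neg]
        exact norm_le_pi_norm _ j
    _ ≤ C * ‖(1 + r)⁻¹‖ := eventually_principal.1 hbound.bound r hr
    _ = C / (1 + r) := by rw [norm_inv, Real.norm_of_nonneg hr₁, div_eq_mul_inv]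

/-- the bound `|v_j'(r)| ≤ C/(1+r)` for `r > 0`. -/
theorem stmt_9 (n : ℕ) (hn : 1 ≤ n) (μ : Fin n → ℝ)
    (hμpos : ∀ i, 0 < μ i) (hμanti : StrictAnti μ)
    (G : ℝ → Matrix (Fin n) (Fin n) ℂ)
    (hG : ∀ (r : ℝ) (i j : Fin n),
      G r i j = ((∫ ρ in (0:ℝ)..r, Real.sin (μ i * ρ) * Real.sin (μ j * ρ) : ℝ) : ℂ))
    (a : Fin n → ℂ) (ha : ∀ j, a j ≠ 0 ∧ 0 ≤ (a j).re) (hinv : ∀ r : ℝ, 0 ≤ r → IsUnit (Matrix.diagonal a + G r))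
    (s : ℝ → Fin n → ℂ) (hs : ∀ (r : ℝ) (i : Fin n), s r i = ((Real.sin (μ i * r) : ℝ) : ℂ))
    (v : ℝ → Fin n → ℂ) (hv : ∀ r : ℝ, v r = -((Matrix.diagonal a + G r)⁻¹ *ᵥ s r)) :
    ∃ C > (0:ℝ), ∀ (j : Fin n), ∀ r : ℝ, 0 < r →
      ‖deriv (fun t : ℝ => v t j) r‖ ≤ C / (1 + r) := by
  obtain ⟨C, hC, hbound⟩ := stmt_9_general μ hμanti.injective
    (fun i j => (add_pos (hμpos i) (hμpos j)).ne') G hG (diagonal a) hinv s hs v hv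
  exact ⟨C, hC, fun j r hr => hbound j r hr.le⟩
end

section
/- There exist constants C > 0 and r₀ > 0 such that for all r ≥ r₀ one has ‖v(r) + (2/r)s(r) − (4/r²)(A + H(r))s(r)‖ ≤ C r⁻³, where ‖·‖ is the norm on ℂⁿ. -/
open Matrix MeasureTheory

/-!
The product-to-sum formula gives `G(r) = (r / 2) • 1 + H(r)` with `H` bounded, so that
`A + G(r) = t • 1 + B` with `t = r / 2 → ∞` and `B = A + H(r)` bounded. The Neumann series then
yields `(t • 1 + B)⁻¹ = t⁻¹ • 1 - t⁻² • B + O(t⁻³)`, which is applied to the bounded vector `s(r)`.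
-/

open Asymptotics Bornology Filter Topology WithLp
open scoped Ring

section NormedAlgebra

variable {α 𝕜 R : Type*} [NormedField 𝕜] [NormedRing R] [NormedAlgebra 𝕜 R]

lemma smul_one_add_eq_smul {t : 𝕜} (ht : t ≠ 0) (b : R) : t • 1 + b = t • (1 + t⁻¹ • b) := by
  rw [smul_add, smul_inv_smul₀ ht]

lemma ringInverse_smul_s15 {t : 𝕜} (ht : t ≠ 0) (b : R) : (t • b)⁻¹ʳ = t⁻¹ • b⁻¹ʳ := by
  have hscalar : (algebraMap 𝕜 R t)⁻¹ʳ = algebraMap 𝕜 R t⁻¹ :=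
    Ring.inverse_unit ((Units.mk0 t ht).map (algebraMap 𝕜 R : 𝕜 →* R))
  rw [Algebra.smul_def, Ring.mul_inverse_rev' (Algebra.commutes t b), hscalar,
    ← Algebra.commutes, ← Algebra.smul_def]

variable {l : Filter α} {t : α → 𝕜} {B : α → R}

lemma isBigO_inv_smul (hB : B =O[l] fun _ => (1 : ℝ)) :
    (fun x => (t x)⁻¹ • B x) =O[l] fun x => ‖t x‖⁻¹ := by
  simpa using (isBigO_refl (fun x => (t x)⁻¹) l).norm_right.smul hB

lemma tendsto_inv_smul_zero (ht : Tendsto t l (cobounded 𝕜)) (hB : B =O[l] fun _ => (1 : ℝ)) :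
    Tendsto (fun x => (t x)⁻¹ • B x) l (𝓝 0) :=
  (isBigO_inv_smul hB).trans_tendsto
    (tendsto_inv_atTop_zero.comp (tendsto_norm_cobounded_atTop.comp ht))

variable [HasSummableGeomSeries R]

lemma eventually_isUnit_smul_one_add (ht : Tendsto t l (cobounded 𝕜))
    (hB : B =O[l] fun _ => (1 : ℝ)) : ∀ᶠ x in l, IsUnit (t x • 1 + B x) := by
  have hone : Tendsto (fun x => 1 + (t x)⁻¹ • B x) l (𝓝 ((1 : Rˣ) : R)) := by
    simpa using (tendsto_inv_smul_zero ht hB).const_add 1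
  filter_upwards [hone (Units.nhds 1), ht.eventually_ne_cobounded 0] with x hunit htx
  rw [smul_one_add_eq_smul htx]
  exact IsUnit.smul (Units.mk0 (t x) htx) hunit

lemma isBigO_ringInverse_smul_one_add_sub (ht : Tendsto t l (cobounded 𝕜))
    (hB : B =O[l] fun _ => (1 : ℝ)) :
    (fun x => (t x • 1 + B x)⁻¹ʳ - (t x)⁻¹ • 1 + (t x ^ 2)⁻¹ • B x) =O[l]
      fun x => ‖t x‖⁻¹ ^ 3 := by
  have hneumann : (fun x => (1 + (t x)⁻¹ • B x)⁻¹ʳ - 1 + (t x)⁻¹ • B x) =O[l]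
      fun x => ‖t x‖⁻¹ ^ 2 := by
    have h := (NormedRing.inverse_add_norm_diff_second_order (1 : Rˣ)).comp_tendsto
      (tendsto_inv_smul_zero ht hB)
    simpa [Function.comp_def] using h.trans ((isBigO_inv_smul hB).norm_left.pow 2)
  refine ((isBigO_refl (fun x => (t x)⁻¹) l).norm_right.smul hneumann).congr' ?_ ?_
  · filter_upwards [ht.eventually_ne_cobounded 0] with x htx
    rw [smul_one_add_eq_smul htx, ringInverse_smul_s15 htx, smul_add, smul_sub, smul_smul, sq, mul_inv]
  · filter_upwards with x
    rw [norm_inv, smul_eq_mul, ← pow_succ']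

end NormedAlgebra

section MatrixFamilies

variable {α m n 𝕜 : Type*} [Fintype m] [Fintype n] [RCLike 𝕜] {l : Filter α}

lemma isBigO_toLp {x : α → n → 𝕜} {g : α → ℝ} (h : ∀ i, (fun a => x a i) =O[l] g) :
    (fun a => toLp 2 (x a)) =O[l] g :=
  ((PiLp.continuousLinearEquiv 2 𝕜 fun _ : n => 𝕜).symm.toContinuousLinearMap.isBigO_comp
    x l).trans (isBigO_pi.2 h)

variable [DecidableEq n]

open scoped Matrix.Norms.L2Operator

lemma isBigO_matrix_of_entries {B : α → Matrix m n 𝕜} {g : α → ℝ}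
    (h : ∀ i j, (fun x => B x i j) =O[l] g) : B =O[l] g := by
  classical
  have hsingle (i : m) (j : n) : (fun x => single i j (B x i j)) =O[l] g := by
    refine IsBigO.trans (.of_bound ‖(single i j 1 : Matrix m n 𝕜)‖ (.of_forall fun x => ?_)) (h i j)
    rw [mul_comm, ← norm_smul, smul_single, smul_eq_mul, mul_one]
  rw [funext fun x => matrix_eq_sum_single (B x)]
  exact .fun_sum fun i _ => .fun_sum fun j _ => hsingle i j

lemma isBigO_toLp_mulVec {E : α → Matrix m n 𝕜} {x : α → n → 𝕜} {f g : α → ℝ}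
    (hE : E =O[l] f) (hx : (fun a => toLp 2 (x a)) =O[l] g) :
    (fun a => toLp 2 (E a *ᵥ x a)) =O[l] fun a => f a * g a :=
  (IsBigO.of_norm_le fun a => l2_opNorm_mulVec (E a) (toLp 2 (x a))).trans
    (hE.norm_left.mul hx.norm_left)

variable {t : α → 𝕜} {B : α → Matrix n n 𝕜}

lemma eventually_isUnit_smul_one_add_matrix (ht : Tendsto t l (cobounded 𝕜))
    (hB : ∀ i j, (fun x => B x i j) =O[l] fun _ => (1 : ℝ)) :
    ∀ᶠ x in l, IsUnit (t x • 1 + B x) :=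
  eventually_isUnit_smul_one_add ht (isBigO_matrix_of_entries hB)

lemma isBigO_inv_smul_one_add_mulVec_sub {s : α → n → 𝕜} (ht : Tendsto t l (cobounded 𝕜))
    (hB : ∀ i j, (fun x => B x i j) =O[l] fun _ => (1 : ℝ))
    (hs : ∀ i, (fun x => s x i) =O[l] fun _ => (1 : ℝ)) :
    (fun x => toLp 2 ((t x • 1 + B x)⁻¹ *ᵥ s x - (t x)⁻¹ • s x + (t x ^ 2)⁻¹ • (B x *ᵥ s x)))
      =O[l] fun x => ‖t x‖⁻¹ ^ 3 := by
  have h := isBigO_toLp_mulVec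
    (isBigO_ringInverse_smul_one_add_sub ht (isBigO_matrix_of_entries hB)) (isBigO_toLp hs)
  simpa only [← nonsing_inv_eq_ringInverse, add_mulVec, sub_mulVec, smul_mulVec, one_mulVec,
    mul_one] using h

end MatrixFamilies

section SineGram

lemma integral_cos_const_mul {c : ℝ} (hc : c ≠ 0) (r : ℝ) :
    ∫ ρ in (0 : ℝ)..r, Real.cos (c * ρ) = Real.sin (c * r) / c := by
  rw [intervalIntegral.integral_comp_mul_left Real.cos hc, integral_cos, mul_zero, Real.sin_zero,
    sub_zero, smul_eq_mul, inv_mul_eq_div]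

lemma integral_sin_const_mul_mul_sin_const_mul (x y r : ℝ) :
    ∫ ρ in (0 : ℝ)..r, Real.sin (x * ρ) * Real.sin (y * ρ) =
      ((∫ ρ in (0 : ℝ)..r, Real.cos ((x - y) * ρ)) -
        ∫ ρ in (0 : ℝ)..r, Real.cos ((x + y) * ρ)) / 2 := by
  have hprod (ρ : ℝ) : Real.sin (x * ρ) * Real.sin (y * ρ) =
      (Real.cos ((x - y) * ρ) - Real.cos ((x + y) * ρ)) / 2 := by
    rw [sub_mul, add_mul, ← Real.two_mul_sin_mul_sin, mul_assoc, mul_div_cancel_left₀ _ two_ne_zero]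
  simp only [hprod]
  rw [intervalIntegral.integral_div, intervalIntegral.integral_sub] <;>
    exact Continuous.intervalIntegrable (by fun_prop) _ _

variable {ι : Type*}

/-- The Gram matrix `G(r)` of the functions `ρ ↦ sin (μ i * ρ)` in `L²(0, r)`, with complex
entries. -/
noncomputable def sineGram (μ : ι → ℝ) (r : ℝ) : Matrix ι ι ℂ :=
  .of fun i j => ((∫ ρ in (0 : ℝ)..r, Real.sin (μ i * ρ) * Real.sin (μ j * ρ) : ℝ) : ℂ)

variable [DecidableEq ι]

/-- The matrix `H(r)`: the bounded oscillating part of `sineGram μ r`, left after removing its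
linear growth `(r / 2) • 1`. -/
noncomputable def sineGramOsc (μ : ι → ℝ) (r : ℝ) : Matrix ι ι ℂ :=
  .of fun i j => ((if i = j then -Real.sin (2 * μ i * r) / (4 * μ i)
    else Real.sin ((μ i - μ j) * r) / (2 * (μ i - μ j))
      - Real.sin ((μ i + μ j) * r) / (2 * (μ i + μ j)) : ℝ) : ℂ)

lemma sineGram_eq_smul_one_add {μ : ι → ℝ} (hμ : Function.Injective μ)
    (hadd : ∀ i j, μ i + μ j ≠ 0) (r : ℝ) :
    sineGram μ r = ((r / 2 : ℝ) : ℂ) • 1 + sineGramOsc μ r := by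
  ext i j
  simp only [sineGram, sineGramOsc, of_apply, Matrix.add_apply, Matrix.smul_apply, one_apply,
    integral_sin_const_mul_mul_sin_const_mul, integral_cos_const_mul (hadd i j)]
  split_ifs with hij
  · subst hij
    simp only [sub_self, zero_mul, Real.cos_zero, intervalIntegral.integral_const, sub_zero,
      smul_eq_mul, mul_one, ← two_mul]
    push_cast
    ring
  · rw [integral_cos_const_mul (sub_ne_zero.2 (hμ.ne hij)), smul_zero, zero_add, sub_div,
      div_div, div_div, mul_comm 2, mul_comm 2]

lemma isBigO_one_sin_div {α : Type*} (f : α → ℝ) (c : ℝ) (l : Filter α) :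
    (fun r => Real.sin (f r) / c) =O[l] fun _ => (1 : ℝ) :=
  .of_bound (1 / |c|) <| .of_forall fun r => by
    rw [norm_one, mul_one, Real.norm_eq_abs, abs_div]
    gcongr
    exact Real.abs_sin_le_one _

lemma isBigO_sineGramOsc_apply (μ : ι → ℝ) (i j : ι) (l : Filter ℝ) :
    (fun r => sineGramOsc μ r i j) =O[l] fun _ => (1 : ℝ) := by
  simp only [sineGramOsc, of_apply]
  rw [Complex.isBigO_ofReal_left]
  split_ifs
  · simpa only [neg_div] using (isBigO_one_sin_div _ _ l).neg_left
  · exact (isBigO_one_sin_div _ _ l).sub (isBigO_one_sin_div _ _ l)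

lemma tendsto_ofReal_half_cobounded :
    Tendsto (fun r : ℝ => ((r / 2 : ℝ) : ℂ)) atTop (cobounded ℂ) :=
  (RCLike.tendsto_ofReal_atTop_cobounded ℂ).comp (tendsto_id.atTop_div_const two_pos)

lemma isBigO_add_sineGramOsc_apply (A : Matrix ι ι ℂ) (μ : ι → ℝ) (i j : ι) (l : Filter ℝ) :
    (fun r => (A + sineGramOsc μ r) i j) =O[l] fun _ => (1 : ℝ) :=
  (isBigO_const_const (A i j) one_ne_zero l).add (isBigO_sineGramOsc_apply μ i j l)

lemma add_sineGram_eq_smul_one_add {μ : ι → ℝ} (hμ : Function.Injective μ)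
    (hadd : ∀ i j, μ i + μ j ≠ 0) (A : Matrix ι ι ℂ) (r : ℝ) :
    A + sineGram μ r = ((r / 2 : ℝ) : ℂ) • 1 + (A + sineGramOsc μ r) := by
  rw [sineGram_eq_smul_one_add hμ hadd, add_left_comm]

variable [Fintype ι]

lemma eventually_isUnit_add_sineGram {μ : ι → ℝ} (hμ : Function.Injective μ)
    (hadd : ∀ i j, μ i + μ j ≠ 0) (A : Matrix ι ι ℂ) :
    ∀ᶠ r in atTop, IsUnit (A + sineGram μ r) := by
  simp only [add_sineGram_eq_smul_one_add hμ hadd]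
  exact eventually_isUnit_smul_one_add_matrix tendsto_ofReal_half_cobounded
    fun i j => isBigO_add_sineGramOsc_apply A μ i j atTop

lemma isBigO_add_sineGram_inv_mulVec_sub {μ : ι → ℝ} (hμ : Function.Injective μ)
    (hadd : ∀ i j, μ i + μ j ≠ 0) (A : Matrix ι ι ℂ) {s : ℝ → ι → ℂ}
    (hs : ∀ i, (fun r => s r i) =O[atTop] fun _ => (1 : ℝ)) :
    (fun r => toLp 2 ((A + sineGram μ r)⁻¹ *ᵥ s r - ((2 / r : ℝ) : ℂ) • s r
      + ((4 / r ^ 2 : ℝ) : ℂ) • ((A + sineGramOsc μ r) *ᵥ s r))) =O[atTop]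
        fun r => (r ^ 3)⁻¹ := by
  have hcoeff (r : ℝ) : (((r / 2 : ℝ) : ℂ) ^ 2)⁻¹ = ((4 / r ^ 2 : ℝ) : ℂ) := by
    push_cast
    rw [div_pow, inv_div]
    norm_num
  have hrate : (fun r : ℝ => ‖((r / 2 : ℝ) : ℂ)‖⁻¹ ^ 3) =O[atTop] fun r => (r ^ 3)⁻¹ :=
    .of_bound 8 <| .of_forall fun r => by
      rw [Complex.norm_real, norm_div, inv_div, div_pow, norm_inv, norm_pow, div_eq_mul_inv]
      norm_num
  have h := (isBigO_inv_smul_one_add_mulVec_sub tendsto_ofReal_half_cobounded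
    (fun i j => isBigO_add_sineGramOsc_apply A μ i j atTop) hs).trans hrate
  simpa only [← add_sineGram_eq_smul_one_add hμ hadd, hcoeff, ← Complex.ofReal_inv, inv_div]
    using h

end SineGram

theorem stmt_15_general {ι : Type*} [Fintype ι] [DecidableEq ι] {μ : ι → ℝ}
    (hμ : Function.Injective μ) (hadd : ∀ i j, μ i + μ j ≠ 0)
    {G : ℝ → Matrix ι ι ℂ}
    (hG : ∀ (r : ℝ) (i j : ι),
      G r i j = ((∫ ρ in (0 : ℝ)..r, Real.sin (μ i * ρ) * Real.sin (μ j * ρ) : ℝ) : ℂ))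
    {H : ℝ → Matrix ι ι ℂ}
    (hH : ∀ (r : ℝ) (i j : ι), H r i j =
      ((if i = j then -Real.sin (2 * μ i * r) / (4 * μ i)
        else Real.sin ((μ i - μ j) * r) / (2 * (μ i - μ j))
          - Real.sin ((μ i + μ j) * r) / (2 * (μ i + μ j)) : ℝ) : ℂ))
    (A : Matrix ι ι ℂ)
    {s : ℝ → ι → ℂ} (hs : ∀ (r : ℝ) (i : ι), s r i = ((Real.sin (μ i * r) : ℝ) : ℂ))
    {v : ℝ → ι → ℂ} (hv : ∀ r : ℝ, v r = -((A + G r)⁻¹ *ᵥ s r)) :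
    ∃ C > (0 : ℝ), ∃ r₀ > (0 : ℝ), ∀ r : ℝ, r₀ ≤ r → IsUnit (A + G r) ∧
      ‖toLp 2 (v r + ((2 / r : ℝ) : ℂ) • s r
        - ((4 / r ^ 2 : ℝ) : ℂ) • ((A + H r) *ᵥ s r))‖ ≤ C / r ^ 3 := by
  obtain rfl : G = sineGram μ := funext fun r => Matrix.ext (hG r)
  obtain rfl : H = sineGramOsc μ := funext fun r => Matrix.ext (hH r)
  have hs_bounded (i : ι) : (fun r => s r i) =O[atTop] fun _ => (1 : ℝ) := by
    simpa only [hs, Complex.isBigO_ofReal_left, div_one] using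
      isBigO_one_sin_div (μ i * ·) 1 atTop
  obtain ⟨C, hC, hbound⟩ := (isBigO_add_sineGram_inv_mulVec_sub hμ hadd A hs_bounded).exists_pos
  obtain ⟨r₀, hr₀⟩ := eventually_atTop.1
    ((eventually_isUnit_add_sineGram hμ hadd A).and hbound.bound)
  refine ⟨C, hC, max r₀ 1, by positivity, fun r hr => ?_⟩
  have hr_pos : 0 < r := zero_lt_one.trans_le ((le_max_right _ _).trans hr)
  obtain ⟨hunit, hnorm⟩ := hr₀ r ((le_max_left _ _).trans hr)
  have hneg : v r + ((2 / r : ℝ) : ℂ) • s r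
      - ((4 / r ^ 2 : ℝ) : ℂ) • ((A + sineGramOsc μ r) *ᵥ s r) =
        -((A + sineGram μ r)⁻¹ *ᵥ s r - ((2 / r : ℝ) : ℂ) • s r
          + ((4 / r ^ 2 : ℝ) : ℂ) • ((A + sineGramOsc μ r) *ᵥ s r)) := by
    rw [hv]
    abel
  refine ⟨hunit, ?_⟩
  rwa [hneg, toLp_neg, norm_neg, ← Real.norm_of_nonneg (by positivity : 0 ≤ C / r ^ 3),
    div_eq_mul_inv C, norm_mul, Real.norm_of_nonneg hC.le]

/-- second-order asymptotic expansion of `v(r)` as `r → ∞`. -/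
theorem stmt_15 (n : ℕ) (hn : 1 ≤ n) (μ : Fin n → ℝ)
    (hμpos : ∀ i, 0 < μ i) (hμanti : StrictAnti μ)
    (G : ℝ → Matrix (Fin n) (Fin n) ℂ)
    (hG : ∀ (r : ℝ) (i j : Fin n),
      G r i j = ((∫ ρ in (0:ℝ)..r, Real.sin (μ i * ρ) * Real.sin (μ j * ρ) : ℝ) : ℂ))
    (H : ℝ → Matrix (Fin n) (Fin n) ℂ)
    (hH : ∀ (r : ℝ) (i j : Fin n), H r i j =
      ((if i = j then -Real.sin (2 * μ i * r) / (4 * μ i)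
        else Real.sin ((μ i - μ j) * r) / (2 * (μ i - μ j))
          - Real.sin ((μ i + μ j) * r) / (2 * (μ i + μ j)) : ℝ) : ℂ))
    (a : Fin n → ℂ) (ha : ∀ j, a j ≠ 0 ∧ 0 ≤ (a j).re) (hinv : ∀ r : ℝ, 0 ≤ r → IsUnit (Matrix.diagonal a + G r))
    (s : ℝ → Fin n → ℂ) (hs : ∀ (r : ℝ) (i : Fin n), s r i = ((Real.sin (μ i * r) : ℝ) : ℂ))
    (v : ℝ → Fin n → ℂ) (hv : ∀ r : ℝ, v r = -((Matrix.diagonal a + G r)⁻¹ *ᵥ s r)) :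
    ∃ C > (0:ℝ), ∃ r₀ > (0:ℝ), ∀ r : ℝ, r₀ ≤ r →
      ‖(WithLp.equiv 2 (Fin n → ℂ)).symm
          (v r + ((2 / r : ℝ) : ℂ) • s r
            - ((4 / r ^ 2 : ℝ) : ℂ) • ((Matrix.diagonal a + H r) *ᵥ s r))‖ ≤ C / r ^ 3 := by
  obtain ⟨C, hC, r₀, hr₀, hbound⟩ := stmt_15_general hμanti.injective
    (fun i j => (add_pos (hμpos i) (hμpos j)).ne') hG hH (diagonal a) hs hv
  exact ⟨C, hC, r₀, hr₀, fun r hr => (hbound r hr).2⟩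
end
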